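/- There is no countable totally ordered group U such that every countable totally ordered abelian group admits an order-embedding into U. In particular, there is no universal countable totally ordered group. -/

import Mathlib

/-!
A homomorphism from `ℤ²` to a countable monoid is determined by the images of finitely many
generators, so there are only countably many of them. On the other hand, a strictly monotone
homomorphism on `D(ξ) = ℤ + ℤξ` pulls back along `(m, n) ↦ m + nξ` to a homomorphism on `ℤ²` from
which `ξ` can be recovered: for `q > 0`, a rational `p / q ≠ ξ` is below `ξ` exactly when the image
of `(p, 0)` is below that of `(0, q)`. Hence only countably many of the groups `D(ξ)` can be mapped
strictly monotonically to a given countable monoid, while there are uncountably many irrational `ξ`.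
-/

theorem countable_monoidHom_of_fg {M N : Type*} [Monoid M] [Monoid.FG M] [Monoid N] [Countable N] :
    Countable (M →* N) := by
  obtain ⟨s, hs⟩ := Monoid.FG.fg_top (M := M)
  have restrict_injective : Function.Injective fun (f : M →* N) (x : s) ↦ f x := fun f g hfg ↦
    MonoidHom.eq_of_eqOn_denseM hs fun x hx ↦ congrFun hfg ⟨x, hx⟩
  exact restrict_injective.countable

/-- The homomorphism `(m, n) ↦ m + nξ`, which presents `D(ξ)` as an image of `ℤ²`. -/
noncomputable def intCombination (ξ : ℝ) : ℤ × ℤ →+ ℝ :=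
  (zmultiplesHom ℝ 1).coprod (zmultiplesHom ℝ ξ)

@[simp]
theorem intCombination_apply (ξ : ℝ) (v : ℤ × ℤ) : intCombination ξ v = v.1 + v.2 * ξ := by
  simp [intCombination]

/-- The ordered group `D(ξ) = ℤ + ℤξ`, with the order inherited from `ℝ`. -/
noncomputable abbrev intSpan (ξ : ℝ) : AddSubgroup ℝ :=
  (intCombination ξ).range

instance countable_intSpan (ξ : ℝ) : Countable (intSpan ξ) :=
  (intCombination ξ).rangeRestrict_surjective.countable

section Slope

variable {P : Type*} [Preorder P] {F : ℤ × ℤ → P} {ξ η : ℝ}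

theorem le_of_intCombination_lt_imp_lt
    (hξ : ∀ v w, intCombination ξ v < intCombination ξ w → F v < F w)
    (hη : ∀ v w, intCombination η v < intCombination η w → F v < F w) : η ≤ ξ := by
  by_contra! hlt
  obtain ⟨r, hξr, hrη⟩ := exists_rat_btwn hlt
  have den_pos : (0 : ℝ) < r.den := mod_cast r.den_pos
  rw [Rat.cast_def, lt_div_iff₀' den_pos] at hξr
  rw [Rat.cast_def, div_lt_iff₀' den_pos] at hrη
  have den_lt_num : F (0, r.den) < F (r.num, 0) := hξ _ _ (by simpa using hξr)
  have num_lt_den : F (r.num, 0) < F (0, r.den) := hη _ _ (by simpa using hrη)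
  exact lt_asymm den_lt_num num_lt_den

theorem eq_of_intCombination_lt_imp_lt
    (hξ : ∀ v w, intCombination ξ v < intCombination ξ w → F v < F w)
    (hη : ∀ v w, intCombination η v < intCombination η w → F v < F w) : ξ = η :=
  le_antisymm (le_of_intCombination_lt_imp_lt hη hξ) (le_of_intCombination_lt_imp_lt hξ hη)

end Slope

section Embedding

variable {U : Type*} [Monoid U] [Preorder U] [Countable U]

theorem countable_of_strictMono_intSpan {ι : Type*} {ξ : ι → ℝ} (hξ : Function.Injective ξ)
    {f : ∀ i, Multiplicative (intSpan (ξ i)) →* U} (hf : ∀ i, StrictMono (f i)) :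
    Countable ι := by
  let pullback i : Multiplicative (ℤ × ℤ) →* U :=
    (f i).comp (intCombination (ξ i)).rangeRestrict.toMultiplicative
  have pullback_lt i (v w : ℤ × ℤ) (hvw : intCombination (ξ i) v < intCombination (ξ i) w) :
      pullback i (.ofAdd v) < pullback i (.ofAdd w) := hf i hvw
  have pullback_injective : Function.Injective pullback := fun i j hij ↦
    hξ <| eq_of_intCombination_lt_imp_lt (pullback_lt i) (hij ▸ pullback_lt j)
  have : Countable (Multiplicative (ℤ × ℤ) →* U) := countable_monoidHom_of_fg
  exact pullback_injective.countable

variable (U) in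
theorem no_universal_countable_ordered_group_general :
    ∃ ξ : ℝ, Irrational ξ ∧ ∀ f : Multiplicative (intSpan ξ) →* U, ¬ StrictMono f := by
  by_contra! h
  choose f hf using fun ξ : {ξ : ℝ // Irrational ξ} ↦ h ξ ξ.2
  have countable_irrational : {ξ : ℝ | Irrational ξ}.Countable :=
    countable_of_strictMono_intSpan Subtype.val_injective hf
  have countable_union := (Set.countable_range ((↑) : ℚ → ℝ)).union countable_irrational
  exact Cardinal.not_countable_real (Set.union_compl_self _ ▸ countable_union)

end Embedding

/-- There is no countable totally ordered group `U` such that every countable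
totally ordered abelian group order-embeds into `U`. -/
theorem no_universal_countable_ordered_group
    (U : Type) [Group U] [LinearOrder U]
    (hU : ∀ a b c d : U, a ≤ b → c * a * d ≤ c * b * d) (hUc : Countable U) :
    ¬ (∀ (G : Type) [CommGroup G] [LinearOrder G],
        (∀ a b c : G, a ≤ b → a * c ≤ b * c) → Countable G →
        ∃ f : G →* U, Function.Injective f ∧ StrictMono f) := by
  intro h
  obtain ⟨ξ, -, hξ⟩ := no_universal_countable_ordered_group_general U
  obtain ⟨f, -, hf⟩ := h (Multiplicative (intSpan ξ)) (fun _ _ c hab ↦ mul_le_mul_left hab c)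
    (countable_intSpan ξ)
  exact hξ f hf
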